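/- arXiv:1705.01366 — 2 statements merged into one kernel-verified Lean document; each statement's English description precedes it below -/
import Mathlib

section
/- Let A be an algebra over a field K and let L/K be a finite separable field extension. If A has finite global dimension and A ⊗_K L is Noetherian, then A ⊗_K L has finite global dimension. -/
open CategoryTheory TensorProduct

universe u

/-- `M` has projective dimension at most `n`: it admits a projective resolution
vanishing in degrees above `n`. -/
def HasProjDimLE (A : Type u) [Ring A] (M : ModuleCat.{u} A) (n : ℕ) : Prop :=
  ∃ P : ProjectiveResolution M, ∀ i, n < i → Limits.IsZero (P.complex.X i)

/-- `A` has finite (left) global dimension: there is a uniform bound on the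
projective dimensions of all (left) `A`-modules. -/
def HasFiniteGlobalDim (A : Type u) [Ring A] : Prop :=
  ∃ n : ℕ, ∀ M : ModuleCat.{u} A, HasProjDimLE A M n

/-!
A finite separable extension `L / K` has a separability idempotent `∑ xᵢ ⊗ yᵢ` in `L ⊗[K] L`: it
satisfies `∑ l xᵢ ⊗ yᵢ = ∑ xᵢ ⊗ yᵢ l` and `∑ xᵢ yᵢ = 1`. If an `A ⊗[K] L`-linear map has an
`A`-linear section `s`, then `m ↦ ∑ xᵢ • s (yᵢ • m)` is an `A ⊗[K] L`-linear section of it, so an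
`A ⊗[K] L`-module which is projective over `A` is projective over `A ⊗[K] L`. Since `A ⊗[K] L` is
projective over `A`, the `n`-th syzygy of an `A ⊗[K] L`-module `M` is also an `n`-th syzygy over
`A`; hence the projective dimension of `M` over `A ⊗[K] L` is at most the one over `A`.
-/

section Resolutions

variable {C : Type*} [Category* C] [Abelian C]

/-- The projective resolution of `X` given by an exact augmented complex
`⋯ ⟶ Q₁ ⟶ Q₀ ⟶ X ⟶ 0` of projective objects `Qᵢ`. -/
noncomputable def projectiveResolutionOfExact {X : C} (Q : ChainComplex C ℕ)
    (hQ : ∀ i, Projective (Q.X i)) (ε : Q.X 0 ⟶ X) (hε : Epi ε) (w : Q.d 1 0 ≫ ε = 0)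
    (h₀ : (ShortComplex.mk _ _ w).Exact) (h : ∀ i, Q.ExactAt (i + 1)) :
    ProjectiveResolution X where
  complex := Q
  projective := hQ
  π := (ChainComplex.toSingle₀Equiv _ _).symm ⟨ε, w⟩
  quasiIso := ⟨fun i ↦ by
    cases i with
    | zero =>
      rw [ChainComplex.quasiIsoAt₀_iff, ShortComplex.quasiIso_iff_of_zeros']
      · refine (ShortComplex.exact_and_epi_g_iff_of_iso ?_).2 ⟨h₀, hε⟩
        exact ShortComplex.isoMk (Iso.refl _) (Iso.refl _) (Iso.refl _)
          ((Category.id_comp _).trans (Category.comp_id _).symm)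
          ((Category.id_comp _).trans
            ((ChainComplex.toSingle₀Equiv_symm_apply_f_zero ε w).symm.trans
              (Category.comp_id _).symm))
      · exact Q.shape _ _ (by simp)
      · rfl
      · rfl
    | succ i =>
      rw [quasiIsoAt_iff_exactAt' _ _ (ChainComplex.exactAt_succ_single_obj _ _)]
      exact h i⟩

lemma exact_epi_comp {S : ShortComplex C} (hS : S.Exact) {X : C} (p : X ⟶ S.X₁) [Epi p] :
    (ShortComplex.mk (p ≫ S.f) S.g (by simp)).Exact :=
  let φ : ShortComplex.mk (p ≫ S.f) S.g (by simp) ⟶ S := { τ₁ := p, τ₂ := 𝟙 _, τ₃ := 𝟙 _ }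
  have : Epi φ.τ₁ := ‹Epi p›
  have : IsIso φ.τ₂ := inferInstanceAs (IsIso (𝟙 S.X₂))
  have : Mono φ.τ₃ := inferInstanceAs (Mono (𝟙 S.X₃))
  (ShortComplex.exact_iff_of_epi_of_isIso_of_mono φ).2 hS

lemma exact_comp_mono {S : ShortComplex C} (hS : S.Exact) {X : C} (i : S.X₃ ⟶ X) [Mono i] :
    (ShortComplex.mk S.f (S.g ≫ i) (by simp)).Exact :=
  let φ : S ⟶ ShortComplex.mk S.f (S.g ≫ i) (by simp) := { τ₁ := 𝟙 _, τ₂ := 𝟙 _, τ₃ := i }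
  have : Epi φ.τ₁ := inferInstanceAs (Epi (𝟙 S.X₁))
  have : IsIso φ.τ₂ := inferInstanceAs (IsIso (𝟙 S.X₂))
  have : Mono φ.τ₃ := ‹Mono i›
  (ShortComplex.exact_iff_of_epi_of_isIso_of_mono φ).1 hS

/-- The splice of a projective resolution of `X₁` with a short exact sequence
`0 ⟶ X₁ ⟶ X₂ ⟶ X₃ ⟶ 0` whose middle term is projective, as a resolution of `X₃` with `X₂` in
degree `0`. -/
noncomputable def spliceProjectiveResolution {S : ShortComplex C} (hS : S.ShortExact)
    [Projective S.X₂] (P : ProjectiveResolution S.X₁) : ProjectiveResolution S.X₃ :=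
  let π₀ : P.complex.X 0 ⟶ S.X₁ := P.π.f 0
  have hπ₀ : P.complex.d 1 0 ≫ π₀ = 0 := P.complex_d_comp_π_f_zero
  have exact₀ : (ShortComplex.mk _ _ hπ₀).Exact :=
    ShortComplex.exact_of_g_is_cokernel _ P.isColimitCokernelCofork
  have : Epi π₀ := inferInstanceAs (Epi (P.π.f 0))
  have : Mono S.f := hS.mono_f
  have w : (π₀ ≫ S.f) ≫ S.g = 0 := by rw [Category.assoc, S.zero, Limits.comp_zero]
  projectiveResolutionOfExact
    (P.complex.augment (π₀ ≫ S.f) (by rw [← Category.assoc, hπ₀, Limits.zero_comp]))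
    (fun | 0 => ‹Projective S.X₂› | i + 1 => P.projective i)
    S.g hS.epi_g w
    (exact_epi_comp hS.exact π₀)
    (by
      intro i
      rw [HomologicalComplex.exactAt_iff' _ (i + 2) (i + 1) i (by simp) (by simp)]
      cases i with
      | zero => exact exact_comp_mono exact₀ S.f
      | succ i => exact P.exact_succ i)

theorem hasProjectiveDimensionLE_iff_exists_projectiveResolution [EnoughProjectives C]
    (X : C) (n : ℕ) : HasProjectiveDimensionLE X n ↔
      ∃ P : ProjectiveResolution X, ∀ i, n < i → Limits.IsZero (P.complex.X i) := by
  constructor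
  · intro h
    induction n generalizing X with
    | zero =>
      have := (projective_iff_hasProjectiveDimensionLE_zero X).2 h
      exact ⟨.self X, fun i hi ↦ HomologicalComplex.isZero_single_obj_X _ _ _ _ hi.ne'⟩
    | succ n ih =>
      have hS : (ShortComplex.mk _ _ (Limits.kernel.condition (Projective.π X))).ShortExact :=
        { exact := ShortComplex.exact_kernel _ }
      obtain ⟨P, hP⟩ := ih _ ((hS.hasProjectiveDimensionLT_X₃_iff n inferInstance).1 h)
      refine ⟨spliceProjectiveResolution hS P, ?_⟩
      rintro (_ | i) hi
      · lia
      · exact hP i (by lia)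
  · rintro ⟨P, hP⟩
    let := HasExt.standard C
    refine HasProjectiveDimensionLT.mk fun i hi Y e ↦ ?_
    obtain ⟨f, hf, rfl⟩ := P.extMk_surjective e (i + 1) rfl
    obtain rfl : f = 0 := (hP i hi).eq_of_src _ _
    simp

lemma hasProjDimLE_iff_hasProjectiveDimensionLE {A : Type u} [Ring A] (M : ModuleCat.{u} A)
    (n : ℕ) : HasProjDimLE A M n ↔ HasProjectiveDimensionLE M n :=
  (hasProjectiveDimensionLE_iff_exists_projectiveResolution M n).symm

end Resolutions

section Averaging

variable (K L : Type*) [CommRing K] [CommRing L] [Algebra K L] [Algebra.FormallyUnramified K L]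
  [Algebra.EssFiniteType K L]
  {M N P : Type*} [AddCommGroup M] [Module K M] [Module L M] [IsScalarTower K L M]
  [AddCommGroup N] [Module K N] [Module L N] [IsScalarTower K L N]
  [AddCommGroup P] [Module K P] [Module L P] [IsScalarTower K L P]

lemma formallyUnramified_sec_comp (g : M →ₗ[L] N) :
    Algebra.FormallyUnramified.sec K L N ∘ₗ g =
      (g.restrictScalars K).baseChange L ∘ₗ Algebra.FormallyUnramified.sec K L M := by
  ext m
  simp only [Algebra.FormallyUnramified.sec, LinearMap.coe_mk, LinearMap.comp_apply]
  induction Algebra.FormallyUnramified.elem K L with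
  | zero => simp
  | tmul x y => simp
  | add x y hx hy => simp_all

/-- The `L`-linear average `m ↦ ∑ xᵢ • s (yᵢ • m)` of a `K`-linear map `s`, where `∑ xᵢ ⊗ yᵢ` is
the separability idempotent `Algebra.FormallyUnramified.elem K L`. -/
noncomputable def unramifiedAverage (s : M →ₗ[K] N) : M →ₗ[L] N :=
  s.liftBaseChange L ∘ₗ Algebra.FormallyUnramified.sec K L M

lemma unramifiedAverage_id : unramifiedAverage K L (LinearMap.id : M →ₗ[K] M) = LinearMap.id :=
  Algebra.FormallyUnramified.comp_sec K L M

lemma comp_unramifiedAverage (f : N →ₗ[L] P) (s : M →ₗ[K] N) :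
    f ∘ₗ unramifiedAverage K L s = unramifiedAverage K L (f.restrictScalars K ∘ₗ s) := by
  rw [unramifiedAverage, unramifiedAverage, ← LinearMap.comp_assoc, LinearMap.liftBaseChange_comp]

lemma unramifiedAverage_comp (s : N →ₗ[K] P) (g : M →ₗ[L] N) :
    unramifiedAverage K L s ∘ₗ g = unramifiedAverage K L (s ∘ₗ g.restrictScalars K) := by
  have h : s.liftBaseChange L ∘ₗ (g.restrictScalars K).baseChange L =
      (s ∘ₗ g.restrictScalars K).liftBaseChange L := by ext; simp
  rw [unramifiedAverage, unramifiedAverage, LinearMap.comp_assoc, formallyUnramified_sec_comp,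
    ← LinearMap.comp_assoc, h]

variable {K} in
lemma unramifiedAverage_rightInverse {f : N →ₗ[L] M} {s : M →ₗ[K] N}
    (h : Function.RightInverse s f) :
    Function.RightInverse (unramifiedAverage K L s) f := by
  have h_id : f.restrictScalars K ∘ₗ s = LinearMap.id := LinearMap.ext h
  have h_comp : f ∘ₗ unramifiedAverage K L s = LinearMap.id := by
    rw [comp_unramifiedAverage, h_id, unramifiedAverage_id]
  exact LinearMap.congr_fun h_comp

lemma unramifiedAverage_smul {A : Type*} [Ring A] [Module A M] [SMulCommClass A L M]
    [Module A N] [SMulCommClass A L N] [LinearMap.CompatibleSMul M N K A]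
    (s : M →ₗ[A] N) (a : A) (m : M) :
    unramifiedAverage K L (s.restrictScalars K) (a • m) =
      a • unramifiedAverage K L (s.restrictScalars K) m := by
  let aM := DistribSMul.toLinearMap L M a
  let aN := DistribSMul.toLinearMap L N a
  have h : s.restrictScalars K ∘ₗ aM.restrictScalars K =
      aN.restrictScalars K ∘ₗ s.restrictScalars K := LinearMap.ext (map_smul s a)
  have h_comm : unramifiedAverage K L (s.restrictScalars K) ∘ₗ aM =
      aN ∘ₗ unramifiedAverage K L (s.restrictScalars K) := by
    rw [unramifiedAverage_comp, comp_unramifiedAverage, h]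
  exact LinearMap.congr_fun h_comm m

end Averaging

section BaseChange

attribute [local instance] Algebra.TensorProduct.rightAlgebra

variable {K L A : Type*} [CommRing K] [CommRing L] [Algebra K L] [Ring A] [Algebra K A]
  {M N : Type*} [AddCommGroup M] [Module (A ⊗[K] L) M] [Module A M]
  [IsScalarTower A (A ⊗[K] L) M]

section

variable [Module L M] [IsScalarTower L (A ⊗[K] L) M]

lemma tmul_smul_eq_smul_smul (a : A) (l : L) (m : M) : (a ⊗ₜ[K] l) • m = a • l • m := by
  rw [← smul_one_smul (A ⊗[K] L) a (l • m), ← smul_one_smul (A ⊗[K] L) l m, smul_smul]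
  simp [Algebra.TensorProduct.one_def, smul_tmul', Algebra.smul_def,
    Algebra.TensorProduct.right_algebraMap_apply]

lemma tmul_smul_eq_smul_smul' (a : A) (l : L) (m : M) : (a ⊗ₜ[K] l) • m = l • a • m := by
  rw [← smul_one_smul (A ⊗[K] L) l (a • m), ← smul_one_smul (A ⊗[K] L) a m, smul_smul]
  simp [Algebra.TensorProduct.one_def, smul_tmul', Algebra.smul_def,
    Algebra.TensorProduct.right_algebraMap_apply]

variable (K L A M) in
include K in
lemma smulCommClass_of_isScalarTower_tensorProduct : SMulCommClass A L M where
  smul_comm a l m := by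
    rw [← tmul_smul_eq_smul_smul (K := K), tmul_smul_eq_smul_smul']

end

variable [AddCommGroup N] [Module (A ⊗[K] L) N] [Module A N] [IsScalarTower A (A ⊗[K] L) N]

lemma exists_rightInverse_tensorProduct_of_rightInverse [Algebra.FormallyUnramified K L]
    [Algebra.EssFiniteType K L] {f : N →ₗ[A ⊗[K] L] M} {s : M →ₗ[A] N}
    (hs : Function.RightInverse s f) :
    ∃ t : M →ₗ[A ⊗[K] L] N, Function.RightInverse t f := by
  let := Module.compHom M (algebraMap K (A ⊗[K] L))
  let := Module.compHom M (algebraMap L (A ⊗[K] L))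
  let := Module.compHom N (algebraMap K (A ⊗[K] L))
  let := Module.compHom N (algebraMap L (A ⊗[K] L))
  have : IsScalarTower K (A ⊗[K] L) M := .of_algebraMap_smul fun _ _ ↦ rfl
  have : IsScalarTower K (A ⊗[K] L) N := .of_algebraMap_smul fun _ _ ↦ rfl
  have : IsScalarTower L (A ⊗[K] L) M := .of_algebraMap_smul fun _ _ ↦ rfl
  have : IsScalarTower L (A ⊗[K] L) N := .of_algebraMap_smul fun _ _ ↦ rfl
  have : IsScalarTower K A M := .to₁₂₄ K A (A ⊗[K] L) M
  have : IsScalarTower K A N := .to₁₂₄ K A (A ⊗[K] L) N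
  have : IsScalarTower K L M := .to₁₂₄ K L (A ⊗[K] L) M
  have : IsScalarTower K L N := .to₁₂₄ K L (A ⊗[K] L) N
  have := smulCommClass_of_isScalarTower_tensorProduct K L A M
  have := smulCommClass_of_isScalarTower_tensorProduct K L A N
  let t : M →ₗ[L] N := unramifiedAverage K L (s.restrictScalars K)
  have ht : Function.RightInverse t f :=
    unramifiedAverage_rightInverse L (f := f.restrictScalars L) hs
  refine ⟨{ t with map_smul' := fun b m ↦ ?_ }, ht⟩
  change t (b • m) = b • t m
  induction b with
  | zero => simp
  | tmul a l =>
    rw [tmul_smul_eq_smul_smul, tmul_smul_eq_smul_smul, unramifiedAverage_smul, map_smul]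
  | add b c hb hc => rw [add_smul, map_add, hb, hc, add_smul]

variable (K L A M) in
lemma projective_tensorProduct_of_projective [Algebra.FormallyUnramified K L]
    [Algebra.EssFiniteType K L] [Module.Projective A M] : Module.Projective (A ⊗[K] L) M := by
  let f : (M →₀ A ⊗[K] L) →ₗ[A ⊗[K] L] M := Finsupp.linearCombination _ id
  have hf : Function.Surjective f := Finsupp.linearCombination_id_surjective _ M
  obtain ⟨s, hs⟩ := Module.projective_lifting_property (f.restrictScalars A) LinearMap.id hf
  obtain ⟨t, ht⟩ := exists_rightInverse_tensorProduct_of_rightInverse (f := f) (s := s)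
    (LinearMap.congr_fun hs)
  exact .of_split t f (LinearMap.ext fun m ↦ ht m)

end BaseChange

lemma hasProjectiveDimensionLE_of_restrictScalars {R S : Type u} [Ring R] [Ring S] [Module R S]
    [IsScalarTower R S S] [Module.Projective R S]
    (h : ∀ (M : Type u) [AddCommGroup M] [Module S M] [Module R M] [IsScalarTower R S M],
      Module.Projective R M → Module.Projective S M)
    (M : Type u) [AddCommGroup M] [Module S M] [Module R M] [IsScalarTower R S M] (n : ℕ)
    (hM : HasProjectiveDimensionLE (ModuleCat.of R M) n) :
    HasProjectiveDimensionLE (ModuleCat.of S M) n := by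
  induction n generalizing M with
  | zero =>
    rw [← projective_iff_hasProjectiveDimensionLE_zero, ← IsProjective.iff_projective] at hM ⊢
    exact h M hM
  | succ n ih =>
    let f : (M →₀ S) →ₗ[S] M := Finsupp.linearCombination S id
    have hf : Function.Surjective f := Finsupp.linearCombination_id_surjective S M
    have hR := LinearMap.shortExact_shortComplexKer (f := f.restrictScalars R) hf
    have hS := LinearMap.shortExact_shortComplexKer hf
    have : Module.Projective R (M →₀ S) := by
      classical exact .of_equiv' (finsuppLEquivDirectSum R S M).symm
    have hR₂ : Projective (ModuleCat.of R (M →₀ S)) :=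
      (IsProjective.iff_projective _).1 inferInstance
    have hS₂ : Projective (ModuleCat.of S (M →₀ S)) :=
      (IsProjective.iff_projective _).1 inferInstance
    exact (hS.hasProjectiveDimensionLT_X₃_iff n hS₂).2 <|
      ih f.ker ((hR.hasProjectiveDimensionLT_X₃_iff n hR₂).1 hM)

theorem finiteGlobalDim_of_baseChange_separable_general {K : Type*} {L A : Type u} [CommRing K]
    [CommRing L] [Algebra K L] [Module.Projective K L] [Algebra.FormallyUnramified K L]
    [Algebra.EssFiniteType K L] [Ring A] [Algebra K A] (hA : HasFiniteGlobalDim A) :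
    HasFiniteGlobalDim (A ⊗[K] L) := by
  obtain ⟨n, hn⟩ := hA
  refine ⟨n, fun M ↦ (hasProjDimLE_iff_hasProjectiveDimensionLE M n).2 ?_⟩
  let ι : A →+* A ⊗[K] L := Algebra.TensorProduct.includeLeftRingHom
  let : Module A M := Module.compHom M ι
  have : IsScalarTower A (A ⊗[K] L) M := ⟨fun a b m ↦ by
    have hab : a • b = ι a * b := by
      rw [← smul_one_mul, Algebra.TensorProduct.one_def, smul_tmul', smul_eq_mul, mul_one]
      rfl
    rw [hab, mul_smul]
    rfl⟩
  have hM : HasProjectiveDimensionLE (ModuleCat.of A M) n :=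
    (hasProjDimLE_iff_hasProjectiveDimensionLE _ n).1 (hn _)
  exact hasProjectiveDimensionLE_of_restrictScalars
    (fun N _ _ _ _ _ ↦ projective_tensorProduct_of_projective K L A N) M n hM

/-- If `A` is an algebra over a field `K` with finite global dimension, `L/K` is a finite
separable field extension, and `A ⊗[K] L` is Noetherian, then `A ⊗[K] L` has finite
global dimension. -/
theorem finiteGlobalDim_of_baseChange_separable
    (K L A : Type u) [Field K] [Field L] [Algebra K L] [FiniteDimensional K L]
    [Algebra.IsSeparable K L] [Ring A] [Algebra K A]
    (hA : HasFiniteGlobalDim A)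
    (hNoeth : IsNoetherianRing (A ⊗[K] L)) :
    HasFiniteGlobalDim (A ⊗[K] L) := by
  have := Algebra.FormallyUnramified.of_isSeparable K L
  exact finiteGlobalDim_of_baseChange_separable_general hA
end

section
/- Grothendieck's generic freeness lemma: Let R be a Noetherian integral domain, T a finitely generated commutative R-algebra, and M a finitely generated T-module. Then there exists a nonzero f ∈ R such that the localization M_f is a free R_f-module. -/
/-!
Induct on the number of generators of `T`. Write `T = B[x]` with `B` generated by one element
fewer and let `N` be a finite `B`-submodule generating `M` over `T`. The submodules
`F i = N + x N + ⋯ + x ^ (i - 1) N` exhaust `M`, and `F (i + 1) / F i ≅ N / K i` for an increasing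
chain of submodules `K i` of `N`. Each `N / K i` is generically free by induction, but a single `f`
is needed for all `i`. Over `Frac R` the algebra `B` becomes Noetherian, so for some `n` and all
`i ≥ n` the module `K i / K n` is `R`-torsion. Once `N / K n` is free, hence torsion-free, it
follows that `K i = K n` after localization, so inverting the elements found for `i ≤ n` suffices.
A module with an exhaustive filtration whose successive quotients are free is free.
-/

universe u

open scoped nonZeroDivisors

lemma iSupIndep_of_disjoint_biSup_lt {α : Type*} [CompleteLattice α] [IsModularLattice α]
    [IsCompactlyGenerated α] {t : ℕ → α} (h : ∀ n, Disjoint (t n) (⨆ i < n, t i)) :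
    iSupIndep t := by
  have supIndep_range (n : ℕ) : (Finset.range n).SupIndep t := by
    induction n with
    | zero => exact Finset.supIndep_empty t
    | succ n ih =>
      rw [Finset.range_add_one]
      refine ih.insert ?_
      simpa only [Finset.sup_eq_iSup, Finset.mem_range] using h n
  exact iSupIndep_iff_supIndep.mpr fun s ↦ (supIndep_range _).subset s.subset_range_sup_succ

section Filtration

variable {A M : Type*} [Ring A] [AddCommGroup M] [Module A M]

lemma exists_free_disjoint_sup_eq {N P : Submodule A M} (hNP : N ≤ P)
    [Module.Free A (P ⧸ N.submoduleOf P)] :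
    ∃ C : Submodule A M, Module.Free A C ∧ Disjoint C N ∧ N ⊔ C = P := by
  obtain ⟨s, hs⟩ := Module.projective_lifting_property (N.submoduleOf P).mkQ LinearMap.id
    (N.submoduleOf P).mkQ_surjective
  replace hs (y) : (N.submoduleOf P).mkQ (s y) = y := LinearMap.congr_fun hs y
  have mkQ_eq_zero (x : P) : (N.submoduleOf P).mkQ x = 0 ↔ (x : M) ∈ N :=
    Submodule.Quotient.mk_eq_zero _
  have inj : Function.Injective (P.subtype ∘ₗ s) :=
    P.injective_subtype.comp (Function.LeftInverse.injective hs)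
  refine ⟨LinearMap.range (P.subtype ∘ₗ s), .of_equiv (LinearEquiv.ofInjective _ inj), ?_,
    le_antisymm (sup_le hNP ?_) fun x hx ↦ ?_⟩
  · rw [Submodule.disjoint_def]
    rintro _ ⟨y, rfl⟩ hy
    rw [← hs y, (mkQ_eq_zero (s y)).mpr hy, map_zero]
  · rintro _ ⟨y, rfl⟩
    exact (s y).2
  · let y := (N.submoduleOf P).mkQ ⟨x, hx⟩
    have sub_mem : x - s y ∈ N :=
      (mkQ_eq_zero (⟨x, hx⟩ - s y)).mp (by rw [map_sub, hs, sub_self])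
    exact Submodule.mem_sup.mpr ⟨_, sub_mem, _, ⟨y, rfl⟩, sub_add_cancel _ _⟩

lemma free_of_filtration {F : ℕ → Submodule A M} (hmono : Monotone F) (hzero : F 0 = ⊥)
    (htop : ⨆ i, F i = ⊤) [∀ i, Module.Free A (F (i + 1) ⧸ (F i).submoduleOf (F (i + 1)))] :
    Module.Free A M := by
  choose C C_free C_disjoint sup_C using
    fun i : ℕ ↦ exists_free_disjoint_sup_eq (hmono (Nat.le_succ i))
  have biSup_C (n : ℕ) : ⨆ i < n, C i = F n := by
    induction n with
    | zero => simp [hzero]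
    | succ n ih => rw [Nat.iSup_lt_succ, ih, sup_C]
  have iSup_C : ⨆ i, C i = ⊤ := by
    rw [eq_top_iff, ← htop]
    exact iSup_le fun n ↦ (biSup_C n).symm.le.trans (iSup₂_le_iSup _ C)
  have indep : iSupIndep C := iSupIndep_of_disjoint_biSup_lt fun n ↦ biSup_C n ▸ C_disjoint n
  exact .of_basis ((DirectSum.isInternal_submodule_of_iSupIndep_of_iSup_eq_top indep
    iSup_C).collectedBasis fun i ↦ Module.Free.chooseBasis A (C i))

end Filtration

section LocalizedSubmodule

variable {R M M' : Type*} [CommRing R] (A : Type*) [CommRing A] [Algebra R A] (S : Submonoid R)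
  [IsLocalization S A] [AddCommGroup M] [Module R M] [AddCommGroup M'] [Module R M'] [Module A M']
  [IsScalarTower R A M'] (ι : M →ₗ[R] M') [IsLocalizedModule S ι]

lemma localized'_submoduleOf {N P : Submodule R M} (hNP : N ≤ P) :
    (N.submoduleOf P).localized' A S (P.toLocalized' A S ι) =
      (N.localized' A S ι).submoduleOf (P.localized' A S ι) := by
  have coe_mk' (x : P) (s : S) :
      ((IsLocalizedModule.mk' (P.toLocalized' A S ι) x s : P.localized' A S ι) : M') =
        IsLocalizedModule.mk' ι (x : M) s := by
    rw [eq_comm, IsLocalizedModule.mk'_eq_iff]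
    exact congrArg Subtype.val (IsLocalizedModule.mk'_cancel' (P.toLocalized' A S ι) x s).symm
  ext x
  constructor
  · rintro ⟨y, hy, s, rfl⟩
    exact ⟨y, hy, s, (coe_mk' y s).symm⟩
  · rintro ⟨y, hy, s, hys⟩
    exact ⟨⟨y, hNP hy⟩, hy, s, Subtype.ext ((coe_mk' _ s).trans hys)⟩

end LocalizedSubmodule

section FreeAway

variable {R M N : Type*} [CommRing R] [AddCommGroup M] [Module R M] [AddCommGroup N] [Module R N]

/-- `M_f` is a free `R_f`-module, possibly of infinite rank. -/
def IsFreeAway (f : R) (M : Type*) [AddCommGroup M] [Module R M] : Prop :=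
  Module.Free (Localization.Away f) (LocalizedModule (Submonoid.powers f) M)

lemma isFreeAway_iff_of_isLocalizedModule {f : R} {M' : Type*} [AddCommGroup M']
    [Module R M'] [Module (Localization.Away f) M'] [IsScalarTower R (Localization.Away f) M']
    (ι : M →ₗ[R] M') [IsLocalizedModule (Submonoid.powers f) ι] :
    IsFreeAway f M ↔ Module.Free (Localization.Away f) M' :=
  Module.Free.iff_of_equiv (IsLocalizedModule.mapEquiv (Submonoid.powers f)
    (LocalizedModule.mkLinearMap (Submonoid.powers f) M) ι (Localization.Away f)
    (LinearEquiv.refl R M))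

open TensorProduct in
lemma isFreeAway_iff_tensorProduct {f : R} :
    IsFreeAway f M ↔ Module.Free (Localization.Away f) (Localization.Away f ⊗[R] M) :=
  Module.Free.iff_of_equiv (LocalizedModule.equivTensorProduct (Submonoid.powers f) M)

namespace IsFreeAway

variable {f g : R}

lemma of_equiv (e : M ≃ₗ[R] N) (h : IsFreeAway f M) : IsFreeAway f N :=
  (isFreeAway_iff_of_isLocalizedModule
    (LocalizedModule.mkLinearMap (Submonoid.powers f) N ∘ₗ e.toLinearMap)).mp h

lemma of_dvd (hfg : f ∣ g) (h : IsFreeAway f M) : IsFreeAway g M := by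
  rw [isFreeAway_iff_tensorProduct] at h ⊢
  have hu : IsUnit (algebraMap R (Localization.Away g) f) :=
    isUnit_of_dvd_unit (map_dvd _ hfg) (IsLocalization.Away.algebraMap_isUnit g)
  let φ : Localization.Away f →ₐ[R] Localization.Away g :=
    IsLocalization.liftAlgHom (M := Submonoid.powers f) (f := Algebra.ofId R (Localization.Away g))
      (by rintro ⟨_, k, rfl⟩; simpa using hu.pow k)
  let := φ.toRingHom.toAlgebra
  have : IsScalarTower R (Localization.Away f) (Localization.Away g) :=
    IsScalarTower.of_algebraMap_eq' φ.comp_algebraMap.symm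
  exact Module.Free.of_equiv (TensorProduct.AlgebraTensorModule.cancelBaseChange R
    (Localization.Away f) (Localization.Away g) (Localization.Away g) M)

lemma of_filtration {F : ℕ → Submodule R M} (hmono : Monotone F) (hzero : F 0 = ⊥)
    (htop : ⨆ i, F i = ⊤) (hfree : ∀ i, IsFreeAway f (F (i + 1) ⧸ (F i).submoduleOf (F (i + 1)))) :
    IsFreeAway f M := by
  let S := Submonoid.powers f
  let ι := LocalizedModule.mkLinearMap S M
  have gc := (Submodule.localized'gi (Localization S) S ι).gc
  have (i : ℕ) : Module.Free (Localization S) ((F (i + 1)).localized' (Localization S) S ι ⧸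
      ((F i).localized' (Localization S) S ι).submoduleOf
        ((F (i + 1)).localized' (Localization S) S ι)) := by
    rw [← localized'_submoduleOf (Localization S) S ι (hmono (Nat.le_succ i))]
    exact (isFreeAway_iff_of_isLocalizedModule
      (Submodule.toLocalizedQuotient' _ _ _ _)).mp (hfree i)
  refine free_of_filtration (F := fun i ↦ (F i).localized' (Localization S) S ι)
    (gc.monotone_l.comp hmono) ?_ ?_
  · rw [hzero, Submodule.localized'_bot]
  · rw [← Submodule.localized'_top (Localization S) S ι, ← htop]
    exact gc.l_iSup.symm

lemma of_surjective_of_ker_le_torsion [IsDomain R] (hf : f ≠ 0) {φ : M →ₗ[R] N}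
    (hsurj : Function.Surjective φ) (hker : LinearMap.ker φ ≤ Submodule.torsion R M)
    (h : IsFreeAway f M) : IsFreeAway f N := by
  let S := Submonoid.powers f
  have hS : S ≤ R⁰ := powers_le_nonZeroDivisors_of_noZeroDivisors hf
  have : Module.Free (Localization S) (LocalizedModule S M) := h
  have : IsDomain (Localization S) := IsLocalization.isDomain_localization hS
  have : FaithfulSMul R (Localization S) :=
    (faithfulSMul_iff_algebraMap_injective _ _).mpr (IsLocalization.injective _ hS)
  have : Module.IsTorsionFree R (LocalizedModule S M) :=
    .trans_faithfulSMul R (Localization S) _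
  let ι := LocalizedModule.mkLinearMap S M
  let κ := LocalizedModule.mkLinearMap S N
  let ψ := IsLocalizedModule.mapExtendScalars S ι κ (Localization S) φ
  have ψ_inj : Function.Injective ψ := by
    refine (injective_iff_map_eq_zero ψ).mpr fun x hx ↦ ?_
    replace hx : x ∈ (LinearMap.ker φ).localized₀ S ι :=
      LinearMap.ker_localizedMap_eq_localized₀_ker S ι κ φ ▸ hx
    obtain ⟨m, hm, s, rfl⟩ := hx
    obtain ⟨a, ha⟩ := (Submodule.mem_torsion_iff m).mp (hker hm)
    have smul_eq_zero : (a : R) • ι m = 0 := by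
      rw [← map_smul, show (a : R) • m = 0 from ha, map_zero]
    exact (IsLocalizedModule.mk'_eq_zero s).mpr
      ((smul_eq_zero_iff_right (nonZeroDivisors.coe_ne_zero a)).mp smul_eq_zero)
  exact Module.Free.of_equiv
    (LinearEquiv.ofBijective ψ ⟨ψ_inj, IsLocalizedModule.map_surjective S ι κ φ hsurj⟩)

lemma quotient_of_le [IsDomain R] {B : Type*} [Ring B] [Module B M] [Module R B]
    [IsScalarTower R B M] (hf : f ≠ 0) {K L : Submodule B M} (hKL : K ≤ L)
    (hL : ∀ x ∈ L, ∃ a : R, a ≠ 0 ∧ a • x ∈ K) (h : IsFreeAway f (M ⧸ K)) :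
    IsFreeAway f (M ⧸ L) := by
  let φ : (M ⧸ K) →ₗ[R] M ⧸ L := (Submodule.factor hKL).restrictScalars R
  refine h.of_surjective_of_ker_le_torsion (φ := φ) hf (Submodule.factor_surjective hKL)
    fun x hx ↦ ?_
  obtain ⟨x, rfl⟩ := Submodule.Quotient.mk_surjective _ x
  obtain ⟨a, ha, hax⟩ := hL x ((Submodule.Quotient.mk_eq_zero L).mp hx)
  exact (Submodule.mem_torsion_iff _).mpr
    ⟨⟨a, mem_nonZeroDivisors_of_ne_zero ha⟩, (Submodule.Quotient.mk_eq_zero K).mpr hax⟩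

lemma of_smul_mem {F : Submodule R M} [Module.Free R F] (h : ∀ m, f • m ∈ F) :
    IsFreeAway f M := by
  let S := Submonoid.powers f
  let ι := LocalizedModule.mkLinearMap S M
  have localized_eq_top : F.localized' (Localization S) S ι = ⊤ := by
    refine eq_top_iff.mpr fun x _ ↦ ?_
    obtain ⟨⟨m, s⟩, rfl⟩ := IsLocalizedModule.mk'_surjective S ι x
    exact ⟨f • m, h m, ⟨f, Submonoid.mem_powers f⟩ * s, IsLocalizedModule.mk'_cancel_left ι m _ s⟩
  have : Module.Free (Localization S) (F.localized' (Localization S) S ι) :=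
    Module.free_of_isLocalizedModule S (F.toLocalized' (Localization S) S ι)
  exact Module.Free.of_equiv (LinearEquiv.ofTop _ localized_eq_top)

end IsFreeAway

lemma exists_free_submodule_isTorsion_quotient (R M : Type*) [CommRing R] [IsDomain R]
    [AddCommGroup M] [Module R M] :
    ∃ F : Submodule R M, Module.Free R F ∧ Module.IsTorsion R (M ⧸ F) := by
  obtain ⟨s, s_indep, s_max⟩ := exists_maximal_linearIndepOn R (id : M → M)
  simp only [id_eq, Set.image_id'] at s_max
  refine ⟨Submodule.span R s, ?_, fun x ↦ ?_⟩
  · exact .of_basis ((Module.Basis.span s_indep).map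
      (LinearEquiv.ofEq _ _ (congrArg _ Subtype.range_coe)))
  obtain ⟨m, rfl⟩ := Submodule.Quotient.mk_surjective _ x
  obtain ⟨a, ha, ham⟩ : ∃ a : R, a ≠ 0 ∧ a • m ∈ Submodule.span R s := by
    by_cases hm : m ∈ s
    · exact ⟨1, one_ne_zero, Submodule.smul_mem _ _ (Submodule.subset_span hm)⟩
    · exact s_max m hm
  exact ⟨⟨a, mem_nonZeroDivisors_of_ne_zero ha⟩, (Submodule.Quotient.mk_eq_zero _).mpr ham⟩

/-- Some nonzero `f : R` makes `M_f` free over `R_f`, the conclusion of generic freeness. -/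
def IsGenericallyFree (R M : Type*) [CommRing R] [AddCommGroup M] [Module R M] : Prop :=
  ∃ f : R, f ≠ 0 ∧ IsFreeAway f M

namespace IsGenericallyFree

lemma of_finite [IsDomain R] [Module.Finite R M] : IsGenericallyFree R M := by
  obtain ⟨F, F_free, torsion⟩ := exists_free_submodule_isTorsion_quotient R M
  obtain ⟨f, hf, hf0⟩ := Submodule.annihilator_top_inter_nonZeroDivisors torsion
  refine ⟨f, nonZeroDivisors.ne_zero hf0, IsFreeAway.of_smul_mem (F := F) fun m ↦ ?_⟩
  exact (Submodule.Quotient.mk_eq_zero F).mp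
    (Submodule.mem_annihilator.mp hf (Submodule.Quotient.mk m) Submodule.mem_top)

end IsGenericallyFree

end FreeAway

lemma exists_forall_smul_mem_of_monotone {B N : Type*} [CommRing B] [AddCommGroup N] [Module B N]
    (S : Submonoid B) [IsNoetherian (Localization S) (LocalizedModule S N)]
    (K : ℕ →o Submodule B N) : ∃ n, ∀ i, ∀ x ∈ K i, ∃ s ∈ S, s • x ∈ K n := by
  let ι := LocalizedModule.mkLinearMap S N
  let L : ℕ →o Submodule (Localization S) (LocalizedModule S N) :=
    { toFun i := (K i).localized' (Localization S) S ι
      monotone' := (Submodule.localized'gi _ S ι).gc.monotone_l.comp K.monotone }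
  obtain ⟨n, L_eq⟩ := monotone_stabilizes_iff_noetherian.mpr ‹_› L
  have L_le (i : ℕ) : L i ≤ L n :=
    (le_total i n).elim (fun h ↦ L.monotone h) fun h ↦ (L_eq i h).ge
  refine ⟨n, fun i x hx ↦ ?_⟩
  obtain ⟨y, hy, s, hys⟩ := L_le i ⟨x, hx, 1, rfl⟩
  obtain ⟨c, hc⟩ := (IsLocalizedModule.mk'_eq_mk'_iff ι _ _ _ _).mp hys
  simp only [one_smul, Submonoid.smul_def] at hc
  exact ⟨c * s, (c * s).2, by simpa only [mul_smul, hc] using (K n).smul_mem c hy⟩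

lemma exists_forall_isFreeAway_quotient {R B N : Type*} [CommRing R] [IsDomain R] [CommRing B]
    [Algebra R B] [AddCommGroup N] [Module R N] [Module B N] [IsScalarTower R B N]
    (K : ℕ →o Submodule B N)
    [IsNoetherian (Localization (Algebra.algebraMapSubmonoid B R⁰))
      (LocalizedModule (Algebra.algebraMapSubmonoid B R⁰) N)]
    (hK : ∀ i, IsGenericallyFree R (N ⧸ K i)) :
    ∃ g : R, g ≠ 0 ∧ ∀ i, IsFreeAway g (N ⧸ K i) := by
  obtain ⟨n, hn⟩ := exists_forall_smul_mem_of_monotone (Algebra.algebraMapSubmonoid B R⁰) K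
  choose f f_ne_zero f_free using hK
  let g := ∏ i ∈ Finset.range (n + 1), f i
  have g_ne_zero : g ≠ 0 := Finset.prod_ne_zero_iff.mpr fun i _ ↦ f_ne_zero i
  have free_of_le {i : ℕ} (hi : i ≤ n) : IsFreeAway g (N ⧸ K i) :=
    (f_free i).of_dvd (Finset.dvd_prod_of_mem f (Finset.mem_range_succ_iff.mpr hi))
  refine ⟨g, g_ne_zero, fun i ↦ ?_⟩
  obtain hi | hi := le_total i n
  · exact free_of_le hi
  · refine (free_of_le le_rfl).quotient_of_le g_ne_zero (K.monotone hi) fun x hx ↦ ?_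
    obtain ⟨_, ⟨a, ha, rfl⟩, hax⟩ := hn i x hx
    exact ⟨a, nonZeroDivisors.ne_zero ha, algebraMap_smul B a x ▸ hax⟩

lemma isNoetherian_localizedModule_algebraMapSubmonoid (R B N : Type*) [CommRing R] [IsDomain R]
    [CommRing B] [Algebra R B] [Algebra.FiniteType R B] [AddCommGroup N] [Module B N]
    [Module.Finite B N] :
    IsNoetherian (Localization (Algebra.algebraMapSubmonoid B R⁰))
      (LocalizedModule (Algebra.algebraMapSubmonoid B R⁰) N) := by
  let S := Algebra.algebraMapSubmonoid B R⁰
  have := Algebra.EssFiniteType.comp R B (Localization S)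
  have := Algebra.EssFiniteType.of_comp R (FractionRing R) (Localization S)
  have := Algebra.EssFiniteType.isNoetherianRing (FractionRing R) (Localization S)
  have := Module.Finite.of_isLocalizedModule S (Rₚ := Localization S)
    (LocalizedModule.mkLinearMap S N)
  exact isNoetherian_of_isNoetherianRing_of_finite _ _

section PowSpan

variable {B M : Type*} [CommRing B] [AddCommGroup M] [Module B M]

/-- `N + φ N + ⋯ + φ ^ (i - 1) N`, the submodule generated by `N` under fewer than `i`
applications of `φ`. -/
def powSpan (φ : Module.End B M) (N : Submodule B M) (i : ℕ) : Submodule B M :=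
  ⨆ j < i, N.map (φ ^ j)

variable (φ : Module.End B M) (N : Submodule B M)

lemma powSpan_zero : powSpan φ N 0 = ⊥ := by
  simp [powSpan]

lemma powSpan_succ (i : ℕ) : powSpan φ N (i + 1) = powSpan φ N i ⊔ N.map (φ ^ i) :=
  Nat.iSup_lt_succ _ i

lemma powSpan_mono : Monotone (powSpan φ N) :=
  fun _ _ hij ↦ biSup_mono fun _ hk ↦ hk.trans_le hij

lemma map_pow_le_powSpan_succ (i : ℕ) : N.map (φ ^ i) ≤ powSpan φ N (i + 1) :=
  powSpan_succ φ N i ▸ le_sup_right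

lemma iSup_powSpan : ⨆ i, powSpan φ N i = ⨆ j, N.map (φ ^ j) :=
  le_antisymm (iSup_le fun _ ↦ iSup₂_le_iSup _ _)
    (iSup_mono' fun j ↦ ⟨j + 1, map_pow_le_powSpan_succ φ N j⟩)

lemma map_powSpan_le (i : ℕ) : (powSpan φ N i).map φ ≤ powSpan φ N (i + 1) := by
  simp only [powSpan, Submodule.map_iSup]
  refine iSup₂_le fun j hj ↦ ?_
  rw [← Submodule.map_comp, ← Module.End.mul_eq_comp, ← pow_succ']
  exact le_iSup₂_of_le (j + 1) (Nat.succ_lt_succ hj) le_rfl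

/-- The surjection of `N` onto `powSpan φ N (i + 1) / powSpan φ N i` induced by `φ ^ i`. -/
def powSpanQuotientMap (i : ℕ) :
    N →ₗ[B] powSpan φ N (i + 1) ⧸ (powSpan φ N i).submoduleOf (powSpan φ N (i + 1)) :=
  Submodule.mkQ _ ∘ₗ ((φ ^ i).domRestrict N).codRestrict _
    fun x ↦ map_pow_le_powSpan_succ φ N i ⟨x, x.2, rfl⟩

lemma mem_ker_powSpanQuotientMap {i : ℕ} {x : N} :
    x ∈ LinearMap.ker (powSpanQuotientMap φ N i) ↔ (φ ^ i) x ∈ powSpan φ N i :=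
  Submodule.Quotient.mk_eq_zero _

lemma monotone_ker_powSpanQuotientMap :
    Monotone fun i ↦ LinearMap.ker (powSpanQuotientMap φ N i) := by
  refine monotone_nat_of_le_succ fun i x hx ↦ ?_
  rw [mem_ker_powSpanQuotientMap] at hx ⊢
  rw [pow_succ', Module.End.mul_apply]
  exact map_powSpan_le φ N i ⟨_, hx, rfl⟩

lemma powSpanQuotientMap_surjective (i : ℕ) : Function.Surjective (powSpanQuotientMap φ N i) := by
  intro y
  obtain ⟨⟨x, hx⟩, rfl⟩ := Submodule.Quotient.mk_surjective _ y
  obtain ⟨a, ha, _, ⟨b, hb, rfl⟩, rfl⟩ := Submodule.mem_sup.mp (powSpan_succ φ N i ▸ hx)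
  refine ⟨⟨b, hb⟩, (Submodule.Quotient.eq _).mpr ?_⟩
  change (φ ^ i) b - (a + (φ ^ i) b) ∈ powSpan φ N i
  rw [sub_add_cancel_right]
  exact neg_mem ha

end PowSpan

lemma IsGenericallyFree.of_iSup_map_pow {R B M : Type*} [CommRing R] [IsDomain R] [CommRing B]
    [Algebra R B] [Algebra.FiniteType R B] [AddCommGroup M] [Module R M] [Module B M]
    [IsScalarTower R B M] (φ : Module.End B M) (N : Submodule B M) [Module.Finite B N]
    (htop : ⨆ j, N.map (φ ^ j) = ⊤)
    (hN : ∀ K : Submodule B N, IsGenericallyFree R (N ⧸ K)) : IsGenericallyFree R M := by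
  have := isNoetherian_localizedModule_algebraMapSubmonoid R B N
  let K : ℕ →o Submodule B N := ⟨_, monotone_ker_powSpanQuotientMap φ N⟩
  obtain ⟨g, hg, free⟩ := exists_forall_isFreeAway_quotient K fun i ↦ hN (K i)
  refine ⟨g, hg, IsFreeAway.of_filtration (F := fun i ↦ (powSpan φ N i).restrictScalars R)
    (powSpan_mono φ N) ?_ ?_ fun i ↦ ?_⟩
  · rw [powSpan_zero, Submodule.restrictScalars_bot]
  · rw [← Submodule.restrictScalars_iSup, iSup_powSpan, htop, Submodule.restrictScalars_top]
  · exact (free i).of_equiv (((powSpanQuotientMap φ N i).quotKerEquivOfSurjective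
      (powSpanQuotientMap_surjective φ N i)).restrictScalars R)

open scoped Pointwise in
lemma iSup_map_lsmul_pow_eq_top {B T M : Type*} [CommRing B] [CommRing T] [Algebra B T]
    [AddCommGroup M] [Module B M] [Module T M] [IsScalarTower B T M] {x : T}
    (hx : Algebra.adjoin B {x} = ⊤) {s : Set M} (hs : Submodule.span T s = ⊤) :
    ⨆ j : ℕ, (Submodule.span B s).map (Algebra.lsmul B B M x ^ j) = ⊤ := by
  have span_powers : Submodule.span B (Submonoid.powers x : Set T) = ⊤ := by
    rw [Submonoid.powers_eq_closure, ← Algebra.adjoin_eq_span, hx, Algebra.top_toSubmodule]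
  have iUnion_image : ⋃ j : ℕ, (Algebra.lsmul B B M x ^ j) '' s =
      (Submonoid.powers x : Set T) • s := by
    ext m
    simp [Set.mem_smul, Set.mem_smul_set, Submonoid.mem_powers_iff, ← map_pow]
  simp only [Submodule.map_span, ← Submodule.span_iUnion]
  rw [iUnion_image, Submodule.span_smul_of_span_eq_top span_powers, hs,
    Submodule.restrictScalars_top]

lemma IsGenericallyFree.of_adjoin_singleton_eq_top {R B T : Type*} {M : Type u} [CommRing R]
    [IsDomain R] [CommRing B] [Algebra R B] [Algebra.FiniteType R B] [CommRing T] [Algebra B T]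
    [AddCommGroup M] [Module R M] [Module B M] [Module T M] [IsScalarTower R B M]
    [IsScalarTower B T M] [Module.Finite T M] {x : T} (hx : Algebra.adjoin B {x} = ⊤)
    (hB : ∀ (N : Type u) [AddCommGroup N] [Module R N] [Module B N] [IsScalarTower R B N]
      [Module.Finite B N], IsGenericallyFree R N) : IsGenericallyFree R M := by
  obtain ⟨s, hs⟩ := (Module.Finite.fg_top : (⊤ : Submodule T M).FG)
  have : Module.Finite B (Submodule.span B (s : Set M)) := Module.Finite.of_fg ⟨s, rfl⟩
  exact .of_iSup_map_pow (Algebra.lsmul B B M x) _ (iSup_map_lsmul_pow_eq_top hx hs) fun K ↦ hB _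

lemma IsGenericallyFree.of_adjoin_range_eq_top {R : Type*} [CommRing R] [IsDomain R] {n : ℕ}
    {T : Type*} [CommRing T] [Algebra R T] {v : Fin n → T}
    (hv : Algebra.adjoin R (Set.range v) = ⊤) (M : Type*) [AddCommGroup M] [Module R M]
    [Module T M] [IsScalarTower R T M] [Module.Finite T M] : IsGenericallyFree R M := by
  induction n generalizing T M with
  | zero =>
    have : Function.Surjective (algebraMap R T) := by
      rw [Algebra.surjective_algebraMap_iff, ← hv, Set.range_eq_empty, Algebra.adjoin_empty]
    have : Module.Finite R T := Module.Finite.of_surjective (Algebra.linearMap R T) this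
    have : Module.Finite R M := Module.Finite.trans T M
    exact .of_finite
  | succ n ih =>
    let s := Set.range (Fin.tail v)
    let B := Algebra.adjoin R s
    let w (i : Fin n) : B := ⟨Fin.tail v i, Algebra.subset_adjoin (Set.mem_range_self i)⟩
    have adjoin_w : Algebra.adjoin R (Set.range w) = ⊤ := by
      rw [← Algebra.adjoin_adjoin_coe_preimage (R := R) (s := s)]
      congr 1
      ext b
      simp [w, s, Subtype.ext_iff]
    have : Algebra.FiniteType R B := ⟨⟨(Set.finite_range w).toFinset, by simpa using adjoin_w⟩⟩
    have adjoin_v_zero : Algebra.adjoin B {v 0} = ⊤ := by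
      refine Subalgebra.restrictScalars_injective R ?_
      rw [← Algebra.adjoin_union_eq_adjoin_adjoin, Set.union_singleton, ← Fin.range_fin_succ, hv,
        Subalgebra.restrictScalars_top]
    exact .of_adjoin_singleton_eq_top adjoin_v_zero fun N ↦ ih adjoin_w N

theorem generic_freeness_general
    (R T M : Type*) [CommRing R] [IsDomain R]
    [CommRing T] [Algebra R T] [Algebra.FiniteType R T]
    [AddCommGroup M] [Module R M] [Module T M] [IsScalarTower R T M]
    [Module.Finite T M] :
    ∃ f : R, f ≠ 0 ∧
      Module.Free (Localization.Away f) (LocalizedModule (Submonoid.powers f) M) := by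
  obtain ⟨n, φ, hφ⟩ := Algebra.FiniteType.iff_quotient_mvPolynomial''.mp ‹Algebra.FiniteType R T›
  have : Algebra.adjoin R (Set.range (φ ∘ MvPolynomial.X)) = ⊤ := by
    rw [Set.range_comp, Algebra.adjoin_image, MvPolynomial.adjoin_range_X, Algebra.map_top,
      (AlgHom.range_eq_top φ).mpr hφ]
  exact IsGenericallyFree.of_adjoin_range_eq_top this M

/-- Grothendieck's generic freeness lemma: if `R` is a Noetherian domain, `T` a finitely
generated commutative `R`-algebra and `M` a finitely generated `T`-module, then there is a
nonzero `f ∈ R` such that the localization `M_f` is free over `R_f`. -/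
theorem generic_freeness
    (R T M : Type u) [CommRing R] [IsDomain R] [IsNoetherianRing R]
    [CommRing T] [Algebra R T] [Algebra.FiniteType R T]
    [AddCommGroup M] [Module R M] [Module T M] [IsScalarTower R T M]
    [Module.Finite T M] :
    ∃ f : R, f ≠ 0 ∧
      Module.Free (Localization.Away f) (LocalizedModule (Submonoid.powers f) M) :=
  generic_freeness_general R T M
end
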